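/- Fix a function g : ℕ → ℝ_{>0} and q ≥ 0 with q ≠ 1. There exists a rate function u such that the stationary distribution corresponding to u in the PALRMP (with general rate parameters) is NOT factorised, but the stationary distribution corresponding to u in the homogeneous PALRMP is factorised with one-point function f(n) = g(n). -/

import Mathlib

open scoped Classical

namespace LRMP

/-- A rate function: `u m n` is positive when the departure site is occupied
(`m ≥ 1`) and zero when it is empty (`m = 0`). -/
def IsRate (u : ℕ → ℕ → ℝ) : Prop :=
  (∀ m n : ℕ, 1 ≤ m → 0 < u m n) ∧ ∀ n : ℕ, u 0 n = 0

/-- The configuration `η^{k,ℓ}`: one particle moved from site `k` to site `ℓ`. -/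
def move (L : ℕ) (η : ZMod L → ℕ) (k ℓ : ZMod L) : ZMod L → ℕ :=
  fun a => if a = k then η a - 1 else if a = ℓ then η a + 1 else η a

/-- Every site strictly between `k` and `ℓ`, moving clockwise from `k`, is empty in `η`. -/
def RightClear (L : ℕ) (η : ZMod L → ℕ) (k ℓ : ZMod L) : Prop :=
  ∀ i : ℕ, 0 < i → i < (ℓ - k).val → η (k + (i : ZMod L)) = 0

/-- Every site strictly between `k` and `ℓ`, moving counterclockwise from `k`, is empty in `η`. -/
def LeftClear (L : ℕ) (η : ZMod L → ℕ) (k ℓ : ZMod L) : Prop :=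
  ∀ i : ℕ, 0 < i → i < (k - ℓ).val → η (k - (i : ZMod L)) = 0

/-- The total rate of the transition `η → η^{k,ℓ}` in the PALRMP with rate function `u`,
rate parameters `x` and asymmetry parameter `q`: a clockwise (right) hop contributes
`x ℓ * u (η k) (η ℓ)` and a counterclockwise (left) hop contributes `q * x ℓ * u (η k) (η ℓ)`. -/
noncomputable def hopRate (L : ℕ) (u : ℕ → ℕ → ℝ) (x : ZMod L → ℝ) (q : ℝ)
    (η : ZMod L → ℕ) (k ℓ : ZMod L) : ℝ :=
  (if k ≠ ℓ ∧ 1 ≤ η k ∧ RightClear L η k ℓ then x ℓ * u (η k) (η ℓ) else 0) +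
  (if k ≠ ℓ ∧ 1 ≤ η k ∧ LeftClear L η k ℓ then q * (x ℓ * u (η k) (η ℓ)) else 0)

/-- The incoming probability current into `η`: the sum over pairs `(k, ℓ)` of the
probability current due to the transition into `η` in which a particle moves from
site `k` to site `ℓ` (coming from the configuration `η^{ℓ,k} = move L η ℓ k`). -/
noncomputable def inflow (L : ℕ) [NeZero L] (u : ℕ → ℕ → ℝ) (x : ZMod L → ℝ) (q : ℝ)
    (π : (ZMod L → ℕ) → ℝ) (η : ZMod L → ℕ) : ℝ :=
  ∑ k : ZMod L, ∑ ℓ : ZMod L,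
    if 1 ≤ η ℓ then π (move L η ℓ k) * hopRate L u x q (move L η ℓ k) k ℓ else 0

/-- The outgoing probability current out of `η`. -/
noncomputable def outflow (L : ℕ) [NeZero L] (u : ℕ → ℕ → ℝ) (x : ZMod L → ℝ) (q : ℝ)
    (π : (ZMod L → ℕ) → ℝ) (η : ZMod L → ℕ) : ℝ :=
  ∑ k : ZMod L, ∑ ℓ : ZMod L, π η * hopRate L u x q η k ℓ

/-- `π` satisfies the master (balance) equation of the PALRMP on `Ω_{L,N}`:
for every configuration `η` with `N` particles, the incoming probability current
equals the outgoing probability current. -/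
def IsStationary (L : ℕ) [NeZero L] (N : ℕ) (u : ℕ → ℕ → ℝ) (x : ZMod L → ℝ) (q : ℝ)
    (π : (ZMod L → ℕ) → ℝ) : Prop :=
  ∀ η : ZMod L → ℕ, (∑ a, η a) = N → inflow L u x q π η = outflow L u x q π η

/-- The stationary distribution corresponding to the rate `u` in the PALRMP with
asymmetry parameter `q` is factorised, with one-point function `f`: for every
`L ≥ 2`, `N ≥ 1` and all positive rate parameters `x`, the factorised distribution
`η ↦ ∏_ℓ f (x ℓ) (η ℓ)` (up to normalisation) is stationary. -/
def FactorisedPALRMP (u : ℕ → ℕ → ℝ) (q : ℝ) (f : ℝ → ℕ → ℝ) : Prop :=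
  (∀ (x : ℝ) (n : ℕ), 0 < x → 0 < f x n) ∧
  ∀ (L N : ℕ) [NeZero L], 2 ≤ L → 1 ≤ N →
    ∀ x : ZMod L → ℝ, (∀ ℓ, 0 < x ℓ) →
      IsStationary L N u x q (fun η => ∏ ℓ, f (x ℓ) (η ℓ))

/-- The stationary distribution corresponding to the rate `u` in the homogeneous
PALRMP (all rate parameters equal to `1`) with asymmetry parameter `q` is factorised,
with one-point function `f`. -/
def FactorisedHomog (u : ℕ → ℕ → ℝ) (q : ℝ) (f : ℕ → ℝ) : Prop :=
  (∀ n : ℕ, 0 < f n) ∧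
  ∀ (L N : ℕ) [NeZero L], 2 ≤ L → 1 ≤ N →
    IsStationary L N u (fun _ => (1 : ℝ)) q (fun η => ∏ ℓ, f (η ℓ))

end LRMP

/-!
Suppose that a weight `π` is in detailed balance for each pair of sites, obstructions being ignored.
Undoing a clockwise hop is a counterclockwise hop, so the inflow into `η` is its outflow with the
two directions exchanged, and `inflow - outflow` is `(1 - q) π(η)` times the difference of the total
counterclockwise and clockwise rates out of `η`. For `q ≠ 1`, stationarity therefore means that
these two rates agree.

When all rate parameters are equal, they agree as soon as `u m n - u n m = F m - F n` for `m, n ≥ 1`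
and `u m 0` is constant for `m ≥ 1`: each `F (η k)` is counted once for the nearest occupied site
clockwise from `k` and once, with the opposite sign, for the nearest one counterclockwise. For
general rate parameters, two sites already force detailed balance, and on a ring of three occupied
sites the coefficient of each `x k` has to vanish, so `u m n` cannot depend on `m ≥ 1` for `n ≥ 1`.
Taking `F` to be a step function gives a rate with the first property but not the second.
-/

namespace LRMP

section Clear

variable {L : ℕ}

lemma rightClear_comp_neg {η : ZMod L → ℕ} {k ℓ : ZMod L} :
    RightClear L (fun a => η (-a)) (-k) (-ℓ) ↔ LeftClear L η k ℓ := by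
  simp only [RightClear, LeftClear, neg_sub_neg, neg_add, neg_neg, ← sub_eq_add_neg]

variable [NeZero L]

lemma rightClear_iff {η : ZMod L → ℕ} {k ℓ : ZMod L} :
    RightClear L η k ℓ ↔ ∀ a, k ≠ a → (a - k).val < (ℓ - k).val → η a = 0 := by
  constructor
  · intro h a hka ha
    have hpos : 0 < (a - k).val := ZMod.val_pos.mpr (sub_ne_zero.mpr hka.symm)
    simpa only [ZMod.natCast_zmod_val, add_sub_cancel] using h (a - k).val hpos ha
  · intro h i hi hiℓ
    have hval : (i : ZMod L).val = i := ZMod.val_natCast_of_lt (hiℓ.trans (ZMod.val_lt _))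
    refine h _ (fun hk => hi.ne ?_) (by rwa [add_sub_cancel_left, hval])
    rw [← hval, left_eq_add.mp hk, ZMod.val_zero]

lemma leftClear_iff_rightClear {η : ZMod L → ℕ} {k ℓ : ZMod L} :
    LeftClear L η k ℓ ↔ RightClear L η ℓ k := by
  have site_eq (i : ℕ) (hi : i < (k - ℓ).val) :
      k - (i : ZMod L) = ℓ + (((k - ℓ).val - i : ℕ) : ZMod L) := by
    rw [Nat.cast_sub hi.le, ZMod.natCast_zmod_val]
    ring
  constructor
  · intro h i hi hik
    have := h ((k - ℓ).val - i) (by omega) (by omega)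
    rwa [site_eq _ (by omega), Nat.sub_sub_self hik.le] at this
  · intro h i hi hiℓ
    rw [site_eq i hiℓ]
    exact h _ (by omega) (by omega)

lemma rightClear_congr {η η' : ZMod L → ℕ} {k ℓ : ZMod L}
    (h : ∀ a, a ≠ k → a ≠ ℓ → η a = η' a) :
    RightClear L η k ℓ ↔ RightClear L η' k ℓ := by
  simp only [rightClear_iff]
  refine forall₃_congr fun a hka haℓ => ?_
  rw [h a hka.symm (by rintro rfl; exact haℓ.false)]

lemma leftClear_congr {η η' : ZMod L → ℕ} {k ℓ : ZMod L}
    (h : ∀ a, a ≠ k → a ≠ ℓ → η a = η' a) :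
    LeftClear L η k ℓ ↔ LeftClear L η' k ℓ := by
  simp only [leftClear_iff_rightClear]
  exact rightClear_congr fun a haℓ hak => h a hak haℓ

lemma ne_and_rightClear_iff_eq_add_one (hL : 2 ≤ L) {η : ZMod L → ℕ} (hη : ∀ a, η a ≠ 0)
    {k ℓ : ZMod L} : k ≠ ℓ ∧ RightClear L η k ℓ ↔ ℓ = k + 1 := by
  have : Fact (1 < L) := ⟨hL⟩
  constructor
  · rintro ⟨hkℓ, hclear⟩
    by_contra hℓ
    have hpos : (ℓ - k).val ≠ 0 := by rwa [Ne, ZMod.val_eq_zero, sub_eq_zero, eq_comm]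
    have hne : (ℓ - k).val ≠ 1 := by
      rwa [Ne, ZMod.val_eq_one hL, sub_eq_iff_eq_add']
    refine hη (k + 1) (rightClear_iff.mp hclear _ (by simp) ?_)
    rw [add_sub_cancel_left, ZMod.val_one]
    omega
  · rintro rfl
    refine ⟨by simp, fun i hi hi1 => ?_⟩
    rw [add_sub_cancel_left, ZMod.val_one] at hi1
    omega

lemma existsUnique_rightClear {η : ZMod L → ℕ} {k : ZMod L} (h : ∃ ℓ, k ≠ ℓ ∧ η ℓ ≠ 0) :
    ∃! ℓ, (k ≠ ℓ ∧ RightClear L η k ℓ) ∧ η ℓ ≠ 0 := by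
  obtain ⟨ℓ, ⟨hkℓ, hℓ⟩, hmin⟩ := exists_minimalFor_of_wellFoundedLT
    (fun ℓ => k ≠ ℓ ∧ η ℓ ≠ 0) (fun ℓ => (ℓ - k).val) h
  have hclear : RightClear L η k ℓ := rightClear_iff.mpr fun a hka ha => by
    by_contra hηa
    exact ha.not_ge (hmin ⟨hka, hηa⟩ ha.le)
  refine ⟨ℓ, ⟨⟨hkℓ, hclear⟩, hℓ⟩, ?_⟩
  rintro a ⟨⟨hka, hclear_a⟩, ha⟩
  refine sub_left_injective (b := k) (ZMod.val_injective L (le_antisymm ?_ ?_))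
  · exact not_lt.mp fun hlt => hℓ (rightClear_iff.mp hclear_a ℓ hkℓ hlt)
  · exact not_lt.mp fun hlt => ha (rightClear_iff.mp hclear a hka hlt)

lemma existsUnique_leftClear {η : ZMod L → ℕ} {k : ZMod L} (h : ∃ ℓ, k ≠ ℓ ∧ η ℓ ≠ 0) :
    ∃! ℓ, (k ≠ ℓ ∧ LeftClear L η k ℓ) ∧ η ℓ ≠ 0 := by
  obtain ⟨ℓ, hkℓ, hℓ⟩ := h
  refine (Equiv.neg (ZMod L)).existsUnique_congr (fun ℓ => ?_) |>.mpr <|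
    existsUnique_rightClear (η := fun a => η (-a)) (k := -k) ⟨-ℓ, by simpa using hkℓ, by simpa⟩
  simp only [Equiv.neg_apply, rightClear_comp_neg, ne_eq, neg_inj, neg_neg]

lemma card_rightClear_eq_card_leftClear (η : ZMod L → ℕ) (k : ZMod L) :
    Finset.card {ℓ | (k ≠ ℓ ∧ RightClear L η k ℓ) ∧ η ℓ ≠ 0} =
      Finset.card {ℓ | (k ≠ ℓ ∧ LeftClear L η k ℓ) ∧ η ℓ ≠ 0} := by
  by_cases h : ∃ ℓ, k ≠ ℓ ∧ η ℓ ≠ 0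
  · rw [(Fintype.existsUnique_iff_card_one _).mp (existsUnique_rightClear h),
      (Fintype.existsUnique_iff_card_one _).mp (existsUnique_leftClear h)]
  · congr 1
    ext ℓ
    grind

end Clear

section Move

variable {L : ℕ} {η : ZMod L → ℕ} {k ℓ : ZMod L}

@[simp]
lemma move_apply_source : move L η k ℓ k = η k - 1 := by
  simp [move]

lemma move_apply_target (h : k ≠ ℓ) : move L η k ℓ ℓ = η ℓ + 1 := by
  simp [move, h.symm]

lemma move_apply_of_ne {a : ZMod L} (hk : a ≠ k) (hℓ : a ≠ ℓ) : move L η k ℓ a = η a := by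
  simp [move, hk, hℓ]

end Move

section Currents

variable {L : ℕ} {u : ℕ → ℕ → ℝ} {x : ZMod L → ℝ} {π : (ZMod L → ℕ) → ℝ}

lemma hopRate_eq (hu : ∀ n, u 0 n = 0) (q : ℝ) (η : ZMod L → ℕ) (k ℓ : ZMod L) :
    hopRate L u x q η k ℓ =
      (if k ≠ ℓ ∧ RightClear L η k ℓ then x ℓ * u (η k) (η ℓ) else 0) +
        q * (if k ≠ ℓ ∧ LeftClear L η k ℓ then x ℓ * u (η k) (η ℓ) else 0) := by
  rcases Nat.eq_zero_or_pos (η k) with h | h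
  · simp [hopRate, h, hu]
  · simp [hopRate, Nat.one_le_iff_ne_zero, h.ne']

/-- Detailed balance of `π` for the dynamics in which a particle may hop between any two sites,
whether or not the sites in between are empty. -/
def IsHopReversible (u : ℕ → ℕ → ℝ) (x : ZMod L → ℝ) (π : (ZMod L → ℕ) → ℝ) : Prop :=
  ∀ (η : ZMod L → ℕ) (k ℓ : ZMod L), k ≠ ℓ → η k ≠ 0 →
    π η * (x ℓ * u (η k) (η ℓ)) =
      π (move L η k ℓ) * (x k * u (move L η k ℓ ℓ) (move L η k ℓ k))

variable [NeZero L]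

/-- The total rate of the clockwise hops out of `η`. -/
noncomputable def clockwiseRate (u : ℕ → ℕ → ℝ) (x : ZMod L → ℝ) (η : ZMod L → ℕ) : ℝ :=
  ∑ k, ∑ ℓ, if k ≠ ℓ ∧ RightClear L η k ℓ then x ℓ * u (η k) (η ℓ) else 0

/-- The total rate of the counterclockwise hops out of `η`, without the factor `q`. -/
noncomputable def counterclockwiseRate (u : ℕ → ℕ → ℝ) (x : ZMod L → ℝ) (η : ZMod L → ℕ) : ℝ :=
  ∑ k, ∑ ℓ, if k ≠ ℓ ∧ LeftClear L η k ℓ then x ℓ * u (η k) (η ℓ) else 0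

lemma clockwiseRate_eq_sum_leftClear (u : ℕ → ℕ → ℝ) (x : ZMod L → ℝ) (η : ZMod L → ℕ) :
    clockwiseRate u x η =
      ∑ k, ∑ ℓ, if k ≠ ℓ ∧ LeftClear L η k ℓ then x k * u (η ℓ) (η k) else 0 := by
  rw [clockwiseRate, Finset.sum_comm]
  simp only [leftClear_iff_rightClear, ne_comm]

lemma counterclockwiseRate_eq_sum_rightClear (u : ℕ → ℕ → ℝ) (x : ZMod L → ℝ) (η : ZMod L → ℕ) :
    counterclockwiseRate u x η =
      ∑ k, ∑ ℓ, if k ≠ ℓ ∧ RightClear L η k ℓ then x k * u (η ℓ) (η k) else 0 := by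
  rw [counterclockwiseRate, Finset.sum_comm]
  simp only [leftClear_iff_rightClear, ne_comm]

lemma outflow_eq (hu : ∀ n, u 0 n = 0) (q : ℝ) (η : ZMod L → ℕ) :
    outflow L u x q π η =
      π η * (clockwiseRate u x η + q * counterclockwiseRate u x η) := by
  simp only [outflow, hopRate_eq hu, clockwiseRate, counterclockwiseRate, Finset.mul_sum,
    mul_add, Finset.sum_add_distrib]

lemma IsHopReversible.inflow_eq (hπ : IsHopReversible u x π) (hu : ∀ n, u 0 n = 0) (q : ℝ)
    (η : ZMod L → ℕ) :
    inflow L u x q π η =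
      π η * (counterclockwiseRate u x η + q * clockwiseRate u x η) := by
  have inflow_term (k ℓ : ZMod L) :
      (if 1 ≤ η ℓ then π (move L η ℓ k) * hopRate L u x q (move L η ℓ k) k ℓ else 0) =
        π η * ((if k ≠ ℓ ∧ RightClear L η k ℓ then x k * u (η ℓ) (η k) else 0) +
          q * (if k ≠ ℓ ∧ LeftClear L η k ℓ then x k * u (η ℓ) (η k) else 0)) := by
    rcases eq_or_ne k ℓ with rfl | hkℓ
    · simp [hopRate]
    rcases eq_or_ne (η ℓ) 0 with hℓ | hℓ
    · simp [hℓ, hu]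
    have hoff (a : ZMod L) (hk : a ≠ k) (hℓ : a ≠ ℓ) : move L η ℓ k a = η a :=
      move_apply_of_ne hℓ hk
    have balance := hπ η ℓ k hkℓ.symm hℓ
    rw [if_pos (Nat.one_le_iff_ne_zero.mpr hℓ), hopRate_eq hu, rightClear_congr hoff,
      leftClear_congr hoff]
    simp only [mul_add, mul_left_comm _ q, mul_ite, mul_zero, balance]
  simp only [inflow, inflow_term, counterclockwiseRate_eq_sum_rightClear,
    clockwiseRate_eq_sum_leftClear, Finset.mul_sum, mul_add, Finset.sum_add_distrib]

lemma IsHopReversible.inflow_sub_outflow (hπ : IsHopReversible u x π) (hu : ∀ n, u 0 n = 0)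
    (q : ℝ) (η : ZMod L → ℕ) :
    inflow L u x q π η - outflow L u x q π η =
      (1 - q) * π η * (counterclockwiseRate u x η - clockwiseRate u x η) := by
  rw [hπ.inflow_eq hu, outflow_eq hu]
  ring

end Currents

section PairBalance

/-- Detailed balance for the exchange of particles between a site with one-point function `f₁` and
rate parameter `x` and a site with one-point function `f₂` and rate parameter `y`. -/
def IsPairBalanced (u : ℕ → ℕ → ℝ) (x y : ℝ) (f₁ f₂ : ℕ → ℝ) : Prop :=
  ∀ m n : ℕ, f₁ (m + 1) * f₂ n * (y * u (m + 1) n) = f₁ m * f₂ (n + 1) * (x * u (n + 1) m)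

lemma prod_eq_mul_mul_prod_erase_erase {ι M : Type*} [Fintype ι] [DecidableEq ι] [CommMonoid M]
    (F : ι → M) {k ℓ : ι} (h : k ≠ ℓ) :
    ∏ a, F a = F k * F ℓ * ∏ a ∈ (Finset.univ.erase k).erase ℓ, F a := by
  rw [mul_assoc, Finset.mul_prod_erase _ F (by simp [h.symm]), Finset.mul_prod_erase _ F (by simp)]

variable {L : ℕ} [NeZero L] {u : ℕ → ℕ → ℝ} {x : ZMod L → ℝ} {F : ZMod L → ℕ → ℝ}

lemma isHopReversible_prod
    (hF : ∀ k ℓ, k ≠ ℓ → IsPairBalanced u (x k) (x ℓ) (F k) (F ℓ)) :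
    IsHopReversible u x fun η => ∏ a, F a (η a) := by
  intro η k ℓ hkℓ hk
  obtain ⟨m, hm⟩ := Nat.exists_eq_succ_of_ne_zero hk
  have hrest : ∏ a ∈ (Finset.univ.erase k).erase ℓ, F a (move L η k ℓ a) =
      ∏ a ∈ (Finset.univ.erase k).erase ℓ, F a (η a) :=
    Finset.prod_congr rfl fun a ha => by
      rw [move_apply_of_ne (by grind) (by grind)]
  simp only [prod_eq_mul_mul_prod_erase_erase _ hkℓ, hrest, move_apply_source,
    move_apply_target hkℓ, hm, Nat.succ_eq_add_one, Nat.add_sub_cancel]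
  linear_combination
    (∏ a ∈ (Finset.univ.erase k).erase ℓ, F a (η a)) * hF k ℓ hkℓ m (η ℓ)

end PairBalance

section Homogeneous

variable {u : ℕ → ℕ → ℝ} {F : ℕ → ℝ}

lemma sum_rightClear_eq_sum_rightClear_swap {L : ℕ} [NeZero L] (F : ℕ → ℝ) (η : ZMod L → ℕ) :
    (∑ k, ∑ ℓ, if k ≠ ℓ ∧ RightClear L η k ℓ then if η ℓ = 0 then 0 else F (η k) else 0) =
      ∑ k, ∑ ℓ, if k ≠ ℓ ∧ RightClear L η k ℓ then if η k = 0 then 0 else F (η ℓ) else 0 := by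
  have sum_occupied (A : ZMod L → Prop) [DecidablePred A] (c : ℝ) :
      (∑ ℓ, if A ℓ then if η ℓ = 0 then 0 else c else 0) =
        Finset.card {ℓ | A ℓ ∧ η ℓ ≠ 0} * c := by
    simp only [← ite_not (η _ = 0), ← ite_and, Finset.sum_ite, Finset.sum_const, smul_zero,
      add_zero, nsmul_eq_mul, ne_eq]
  rw [eq_comm, Finset.sum_comm]
  simp only [sum_occupied, card_rightClear_eq_card_leftClear, leftClear_iff_rightClear, ne_comm]

lemma clockwiseRate_one_eq_counterclockwiseRate_one {L : ℕ} [NeZero L]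
    (hF : ∀ m n, u m n - u n m = (if n = 0 then 0 else F m) - (if m = 0 then 0 else F n))
    (η : ZMod L → ℕ) :
    clockwiseRate u (fun _ => 1) η = counterclockwiseRate u (fun _ => 1) η := by
  have telescope := sum_rightClear_eq_sum_rightClear_swap F η
  rw [← sub_eq_zero] at telescope ⊢
  rw [clockwiseRate, counterclockwiseRate_eq_sum_rightClear, ← telescope]
  simp only [one_mul, ← Finset.sum_sub_distrib, ite_sub_ite, sub_self, hF]

theorem factorisedHomog_of_isPairBalanced {g : ℕ → ℝ} (hu : ∀ n, u 0 n = 0) (hg : ∀ n, 0 < g n)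
    (hug : IsPairBalanced u 1 1 g g)
    (hF : ∀ m n, u m n - u n m = (if n = 0 then 0 else F m) - (if m = 0 then 0 else F n))
    (q : ℝ) : FactorisedHomog u q g := by
  refine ⟨hg, fun L N _ _ _ η _ => ?_⟩
  have hrev : IsHopReversible u (fun _ : ZMod L => 1) fun η => ∏ a, g (η a) :=
    isHopReversible_prod fun _ _ _ => hug
  rw [← sub_eq_zero, hrev.inflow_sub_outflow hu, clockwiseRate_one_eq_counterclockwiseRate_one hF,
    sub_self, mul_zero]

end Homogeneous

section TwoSites

variable {u : ℕ → ℕ → ℝ} {q : ℝ}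

lemma rightClear_two (η : ZMod 2 → ℕ) (k ℓ : ZMod 2) : RightClear 2 η k ℓ := by
  intro i hi hiℓ
  have := ZMod.val_lt (ℓ - k)
  omega

lemma hopRate_two (hu : ∀ n, u 0 n = 0) (x : ZMod 2 → ℝ) (q : ℝ) (η : ZMod 2 → ℕ)
    {k ℓ : ZMod 2} (h : k ≠ ℓ) :
    hopRate 2 u x q η k ℓ = (1 + q) * (x ℓ * u (η k) (η ℓ)) := by
  simp only [hopRate_eq hu, leftClear_iff_rightClear, rightClear_two, h, ne_eq, not_false_eq_true,
    and_self, if_true]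
  ring

lemma IsStationary.two_sites {N : ℕ} {x : ZMod 2 → ℝ} {π : (ZMod 2 → ℕ) → ℝ}
    (hπ : IsStationary 2 N u x q π) (hu : ∀ n, u 0 n = 0) (hq : 0 ≤ q) {η : ZMod 2 → ℕ}
    (hη : ∑ a, η a = N) :
    (if η 1 = 0 then 0 else π (move 2 η 1 0) * (x 1 * u (η 0 + 1) (η 1 - 1))) +
        (if η 0 = 0 then 0 else π (move 2 η 0 1) * (x 0 * u (η 1 + 1) (η 0 - 1))) =
      π η * (x 1 * u (η 0) (η 1) + x 0 * u (η 1) (η 0)) := by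
  have h01 : (0 : ZMod 2) ≠ 1 := by decide
  have hsum (c : ZMod 2 → ℝ) : ∑ k, c k = c 0 + c 1 := Fin.sum_univ_two c
  have hself (η : ZMod 2 → ℕ) (k : ZMod 2) : hopRate 2 u x q η k k = 0 := by simp [hopRate]
  have balance := hπ η hη
  simp only [inflow, outflow, hsum, hself, hopRate_two hu x q _ h01, hopRate_two hu x q _ h01.symm,
    move_apply_source, move_apply_target h01, move_apply_target h01.symm,
    Nat.one_le_iff_ne_zero, ite_not] at balance
  have hq1 : 1 + q ≠ 0 := by positivity
  apply mul_left_cancel₀ hq1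
  split_ifs at balance ⊢ <;> linear_combination balance

variable {f : ℝ → ℕ → ℝ} {x y : ℝ}

lemma FactorisedPALRMP.two_sites (hf : FactorisedPALRMP u q f) (hu : ∀ n, u 0 n = 0) (hq : 0 ≤ q)
    (hx : 0 < x) (hy : 0 < y) {m n : ℕ} (hmn : 1 ≤ m + n) :
    (if n = 0 then 0 else f x (m + 1) * f y (n - 1) * (y * u (m + 1) (n - 1))) +
        (if m = 0 then 0 else f x (m - 1) * f y (n + 1) * (x * u (n + 1) (m - 1))) =
      f x m * f y n * (y * u m n + x * u n m) := by
  obtain ⟨η, rfl, rfl⟩ : ∃ η : ZMod 2 → ℕ, η 0 = m ∧ η 1 = n := ⟨![m, n], rfl, rfl⟩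
  obtain ⟨X, rfl, rfl⟩ : ∃ X : ZMod 2 → ℝ, X 0 = x ∧ X 1 = y := ⟨![x, y], rfl, rfl⟩
  have h01 : (0 : ZMod 2) ≠ 1 := by decide
  have hprod (c : ZMod 2 → ℝ) : ∏ k, c k = c 0 * c 1 := Fin.prod_univ_two c
  have hX : ∀ k, 0 < X k := Fin.forall_fin_two.mpr ⟨hx, hy⟩
  have balance := (hf.2 2 _ le_rfl hmn X hX).two_sites hu hq (Fin.sum_univ_two η)
  simpa only [hprod, move_apply_source, move_apply_target h01, move_apply_target h01.symm]
    using balance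

/-- Along the states `(0, N), …, (N, 0)` of two sites, stationarity makes the net current constant,
and it vanishes at the end of the chain. -/
theorem FactorisedPALRMP.isPairBalanced (hf : FactorisedPALRMP u q f) (hu : ∀ n, u 0 n = 0)
    (hq : 0 ≤ q) (hx : 0 < x) (hy : 0 < y) : IsPairBalanced u x y (f x) (f y) := by
  intro m n
  induction n generalizing m with
  | zero => simpa [hu] using (hf.two_sites hu hq hx hy (m := m + 1) (n := 0) (by omega)).symm
  | succ n ih =>
    have balance := hf.two_sites hu hq hx hy (m := m + 1) (n := n + 1) (by omega)
    simp only [Nat.add_eq_zero_iff, one_ne_zero, and_false, if_false, Nat.add_sub_cancel] at balance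
    linear_combination ih (m + 1) - balance

end TwoSites

section Inhomogeneous

lemma eq_zero_of_forall_pos_sum_mul_eq_zero {ι : Type*} [Fintype ι] {c : ι → ℝ}
    (h : ∀ x : ι → ℝ, (∀ k, 0 < x k) → ∑ k, x k * c k = 0) : c = 0 := by
  funext k
  have hone : ∑ a, c a = 0 := by simpa using h 1 fun _ => one_pos
  have hsingle : (0 : ι → ℝ) ≤ Pi.single k 1 := Pi.single_nonneg.mpr zero_le_one
  have hupdate := h (1 + Pi.single k 1) fun a => add_pos_of_pos_of_nonneg one_pos (hsingle a)
  simpa [add_mul, Finset.sum_add_distrib, hone, Pi.single_apply] using hupdate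

variable {u : ℕ → ℕ → ℝ} {q : ℝ} {f : ℝ → ℕ → ℝ}

lemma FactorisedPALRMP.clockwiseRate_eq (hf : FactorisedPALRMP u q f) (hu : ∀ n, u 0 n = 0)
    (hq : 0 ≤ q) (hq1 : q ≠ 1) {L : ℕ} [NeZero L] (hL : 2 ≤ L) {x : ZMod L → ℝ}
    (hx : ∀ k, 0 < x k) {η : ZMod L → ℕ} (hη : 1 ≤ ∑ a, η a) :
    clockwiseRate u x η = counterclockwiseRate u x η := by
  have hrev : IsHopReversible u x fun η => ∏ a, f (x a) (η a) :=
    isHopReversible_prod fun k ℓ _ => hf.isPairBalanced hu hq (hx k) (hx ℓ)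
  have hpos : 0 < ∏ a, f (x a) (η a) := Finset.prod_pos fun a _ => hf.1 _ _ (hx a)
  have hzero := hrev.inflow_sub_outflow hu q η
  rw [hf.2 L _ hL hη x hx η rfl, sub_self, eq_comm] at hzero
  have hcoeff : (1 - q) * ∏ a, f (x a) (η a) ≠ 0 :=
    mul_ne_zero (sub_ne_zero.mpr hq1.symm) hpos.ne'
  exact (sub_eq_zero.mp ((mul_eq_zero_iff_left hcoeff).mp hzero)).symm

lemma clockwiseRate_of_forall_ne_zero {L : ℕ} [NeZero L] (hL : 2 ≤ L) (x : ZMod L → ℝ)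
    {η : ZMod L → ℕ} (hη : ∀ a, η a ≠ 0) :
    clockwiseRate u x η = ∑ k, x k * u (η (k - 1)) (η k) := by
  simp only [clockwiseRate, ne_and_rightClear_iff_eq_add_one hL hη, Finset.sum_ite_eq',
    Finset.mem_univ, if_true]
  exact Fintype.sum_equiv (Equiv.addRight 1) _ _ fun k => by simp

lemma counterclockwiseRate_of_forall_ne_zero {L : ℕ} [NeZero L] (hL : 2 ≤ L) (x : ZMod L → ℝ)
    {η : ZMod L → ℕ} (hη : ∀ a, η a ≠ 0) :
    counterclockwiseRate u x η = ∑ k, x k * u (η (k + 1)) (η k) := by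
  simp only [counterclockwiseRate_eq_sum_rightClear, ne_and_rightClear_iff_eq_add_one hL hη,
    Finset.sum_ite_eq', Finset.mem_univ, if_true]

lemma FactorisedPALRMP.rate_sub_one_eq_rate_add_one (hf : FactorisedPALRMP u q f)
    (hu : ∀ n, u 0 n = 0) (hq : 0 ≤ q) (hq1 : q ≠ 1) {L : ℕ} [NeZero L] (hL : 2 ≤ L)
    {η : ZMod L → ℕ} (hη : ∀ a, η a ≠ 0) (k : ZMod L) :
    u (η (k - 1)) (η k) = u (η (k + 1)) (η k) := by
  have hN : 1 ≤ ∑ a, η a :=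
    (Nat.one_le_iff_ne_zero.mpr (hη k)).trans (Finset.single_le_sum_of_canonicallyOrdered (by simp))
  refine sub_eq_zero.mp (congrFun (eq_zero_of_forall_pos_sum_mul_eq_zero
    (c := fun k => u (η (k - 1)) (η k) - u (η (k + 1)) (η k)) fun x hx => ?_) k)
  have hrates := hf.clockwiseRate_eq hu hq hq1 hL hx hN
  rw [clockwiseRate_of_forall_ne_zero hL x hη,
    counterclockwiseRate_of_forall_ne_zero hL x hη] at hrates
  simp only [mul_sub, Finset.sum_sub_distrib, hrates, sub_self]

theorem FactorisedPALRMP.rate_eq_of_ne_zero (hf : FactorisedPALRMP u q f) (hu : ∀ n, u 0 n = 0)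
    (hq : 0 ≤ q) (hq1 : q ≠ 1) {m m' n : ℕ} (hm : m ≠ 0) (hm' : m' ≠ 0) (hn : n ≠ 0) :
    u m n = u m' n := by
  obtain ⟨η, rfl, rfl, rfl⟩ : ∃ η : ZMod 3 → ℕ, η 0 = n ∧ η (0 + 1) = m' ∧ η (0 - 1) = m :=
    ⟨![n, m', m], rfl, rfl, rfl⟩
  have hη : ∀ a, η a ≠ 0 := by
    intro a
    fin_cases a
    exacts [hn, hm', hm]
  exact hf.rate_sub_one_eq_rate_add_one hu hq hq1 (by norm_num) hη 0

end Inhomogeneous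

section ShiftedRate

variable {g : ℕ → ℝ} {t : ℝ}

/-- The rate `u` determined by pair balance with respect to `g`, `u m 0 = 1` for `m ≥ 1`, and
`u m n - u n m = F m - F n` for `m, n ≥ 1`, where `F 1 = 0` and `F m = t` for `m ≥ 2`. -/
noncomputable def shiftedRate (g : ℕ → ℝ) (t : ℝ) (m n : ℕ) : ℝ :=
  if m = 0 then 0
  else (g 0 * g (m + n) + if 2 ≤ m ∧ 1 ≤ n then t * g 1 * g (m + n - 1) else 0) / (g m * g n)

@[simp]
lemma shiftedRate_zero_left (g : ℕ → ℝ) (t : ℝ) (n : ℕ) : shiftedRate g t 0 n = 0 :=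
  if_pos rfl

lemma shiftedRate_zero_right (hg : ∀ n, g n ≠ 0) (t : ℝ) {m : ℕ} (hm : m ≠ 0) :
    shiftedRate g t m 0 = 1 := by
  simp [shiftedRate, hm, mul_comm (g m), hg]

lemma shiftedRate_one_left (g : ℕ → ℝ) (t : ℝ) (n : ℕ) :
    shiftedRate g t 1 n = g 0 * g (n + 1) / (g n * g 1) := by
  simp [shiftedRate, add_comm, mul_comm (g n)]

lemma shiftedRate_one_right (hg : ∀ n, g n ≠ 0) (t : ℝ) {m : ℕ} (hm : 2 ≤ m) :
    shiftedRate g t m 1 = g 0 * g (m + 1) / (g m * g 1) + t := by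
  have := hg m
  have := hg 1
  rw [shiftedRate, if_neg (by omega), if_pos ⟨hm, le_rfl⟩, Nat.add_sub_cancel]
  field_simp

lemma shiftedRate_comm (g : ℕ → ℝ) (t : ℝ) {m n : ℕ} (hm : 2 ≤ m) (hn : 2 ≤ n) :
    shiftedRate g t m n = shiftedRate g t n m := by
  have hm1 : 1 ≤ m := by omega
  have hn1 : 1 ≤ n := by omega
  have hm0 : m ≠ 0 := by omega
  have hn0 : n ≠ 0 := by omega
  simp only [shiftedRate, hm, hn, hm1, hn1, hm0, hn0, and_self, add_comm m, mul_comm (g m)]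

lemma isRate_shiftedRate (hg : ∀ n, 0 < g n) (ht : 0 ≤ t) : IsRate (shiftedRate g t) := by
  refine ⟨fun m n hm => ?_, shiftedRate_zero_left g t⟩
  rw [shiftedRate, if_neg (by omega)]
  have hshift : 0 ≤ if 2 ≤ m ∧ 1 ≤ n then t * g 1 * g (m + n - 1) else 0 := by
    have := hg 1
    have := hg (m + n - 1)
    split_ifs <;> positivity
  exact div_pos (add_pos_of_pos_of_nonneg (mul_pos (hg _) (hg _)) hshift) (mul_pos (hg _) (hg _))

lemma isPairBalanced_shiftedRate (hg : ∀ n, g n ≠ 0) (t : ℝ) :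
    IsPairBalanced (shiftedRate g t) 1 1 g g := by
  intro m n
  have hcond : (2 ≤ m + 1 ∧ 1 ≤ n) ↔ (2 ≤ n + 1 ∧ 1 ≤ m) := by omega
  have hsum : m + 1 + n = n + 1 + m := by omega
  have := hg m
  have := hg n
  have := hg (m + 1)
  have := hg (n + 1)
  simp only [shiftedRate, Nat.add_eq_zero_iff, one_ne_zero, and_false, if_false, hcond, hsum]
  field_simp

/-- The function `F` in the description of `shiftedRate`, extended by `F 0 = -1` to account for
`u m 0 = 1`. -/
def ratePotential (t : ℝ) : ℕ → ℝ
  | 0 => -1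
  | 1 => 0
  | _ + 2 => t

lemma shiftedRate_sub_swap (hg : ∀ n, g n ≠ 0) (t : ℝ) (m n : ℕ) :
    shiftedRate g t m n - shiftedRate g t n m =
      (if n = 0 then 0 else ratePotential t m) - (if m = 0 then 0 else ratePotential t n) := by
  match m, n with
  | 0, 0 => simp
  | 0, n + 1 => simp [ratePotential, shiftedRate_zero_right hg]
  | m + 1, 0 => simp [ratePotential, shiftedRate_zero_right hg]
  | 1, 1 => simp [ratePotential]
  | 1, n + 2 => simp [ratePotential, shiftedRate_one_left, shiftedRate_one_right hg]
  | m + 2, 1 => simp [ratePotential, shiftedRate_one_left, shiftedRate_one_right hg]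
  | m + 2, n + 2 =>
    simp [ratePotential, shiftedRate_comm g t (Nat.le_add_left 2 m) (Nat.le_add_left 2 n)]

lemma shiftedRate_one_one_lt (hg : ∀ n, 0 < g n) (ht : g 0 * g 2 / (g 1 * g 1) ≤ t) :
    shiftedRate g t 1 1 < shiftedRate g t 2 1 := by
  have hpos : 0 < g 0 * g 3 / (g 2 * g 1) :=
    div_pos (mul_pos (hg 0) (hg 3)) (mul_pos (hg 2) (hg 1))
  rw [shiftedRate_one_left, shiftedRate_one_right (fun n => (hg n).ne') t le_rfl]
  linarith

end ShiftedRate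

/-- there is a rate function `u` whose stationary distribution in the
PALRMP is not factorised, but whose stationary distribution in the homogeneous PALRMP
is factorised with one-point function `g`. -/
theorem exists_rate_homog_not_inhomog
    (g : ℕ → ℝ) (hg : ∀ n, 0 < g n)
    (q : ℝ) (hq : 0 ≤ q) (hq1 : q ≠ 1) :
    ∃ u : ℕ → ℕ → ℝ, IsRate u ∧
      (¬ ∃ f : ℝ → ℕ → ℝ, FactorisedPALRMP u q f) ∧
      FactorisedHomog u q g := by
  set t := g 0 * g 2 / (g 1 * g 1) with ht_def
  have ht : 0 ≤ t := (div_pos (mul_pos (hg 0) (hg 2)) (mul_pos (hg 1) (hg 1))).le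
  have hg0 (n : ℕ) : g n ≠ 0 := (hg n).ne'
  have hrate : IsRate (shiftedRate g t) := isRate_shiftedRate hg ht
  refine ⟨shiftedRate g t, hrate, ?_, ?_⟩
  · rintro ⟨f, hf⟩
    exact (shiftedRate_one_one_lt hg ht_def.ge).ne
      (hf.rate_eq_of_ne_zero hrate.2 hq hq1 one_ne_zero two_ne_zero one_ne_zero)
  · exact factorisedHomog_of_isPairBalanced hrate.2 hg (isPairBalanced_shiftedRate hg0 t)
      (shiftedRate_sub_swap hg0 t) q

end LRMP
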